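/- Fix α = 0.981. For every integer w ≥ 4 and every t ∈ (0,1/2], κ_1^{(w)}(t) < 0.14; that is, g(1 − t/2^{w−1}) · T(t,w) · α^{−⌈log_4(w+1)⌉} < 0.14. -/

import Mathlib

open Finset

/-- `α^{-⌈log_4 (w+1)⌉}` with `α = 0.981`; for `w ≥ 1`, `⌈log_4 (w+1)⌉ = Nat.clog 4 (w+1)`. -/
noncomputable def amort (w : ℕ) : ℝ := (0.981 : ℝ) ^ (-(Nat.clog 4 (w + 1) : ℤ))

/-- `T(t,w) = (t/2^{w−1})/(1 − t/2^{w−1}) · ((1−t)/√t + (w−1)/√2)`. -/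
noncomputable def Tfun (t : ℝ) (w : ℕ) : ℝ :=
  (t / 2 ^ (w - 1)) / (1 - t / 2 ^ (w - 1)) * ((1 - t) / Real.sqrt t + ((w : ℝ) - 1) / Real.sqrt 2)

/-- `g(h) = √(h/(1+h))`. -/
noncomputable def gfun (h : ℝ) : ℝ := Real.sqrt (h / (1 + h))

/-!
With `h = 1 - t / 2^(w-1)`, the denominator of `T` combines with `g` into
`g(h) / h = 1 / √(h (1 + h))`, which decreases in `h` and hence increases in `t`. In the variable
`√t`, the rest of the `t`-dependence is a cubic that increases up to `√t = 1 / √2`, so `κ_1^{(w)}`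
is largest at `t = 1/2`. There the sum in `T` collapses to `w / √2`, and passing from `w` to `w + 1`
multiplies `w / 2^w · α^{-⌈log_4 (w+1)⌉}` by at most `(w + 1) / (2 · 0.981 · w) < 1`. Hence the
maximum over `w ≥ 4` is `κ_1^{(4)}(1/2) ≈ 0.1363`.
-/

lemma gfun_nonneg (h : ℝ) : 0 ≤ gfun h := Real.sqrt_nonneg _

lemma gfun_div_self {h : ℝ} (hh : 0 < h) : gfun h / h = (√(h * (1 + h)))⁻¹ := by
  have hquot : h / (1 + h) = h ^ 2 / (h * (1 + h)) := by field_simp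
  rw [gfun, hquot, Real.sqrt_div (sq_nonneg h), Real.sqrt_sq hh.le, div_div_cancel_left' hh.ne']

lemma antitoneOn_gfun_div_self : AntitoneOn (fun h ↦ gfun h / h) (Set.Ioi 0) := by
  intro a (ha : 0 < a) b (hb : 0 < b) hab
  simp only [gfun_div_self ha, gfun_div_self hb]
  gcongr

lemma clog_succ_le_clog_add_one (b n : ℕ) : Nat.clog b (n + 1) ≤ Nat.clog b n + 1 := by
  rcases le_or_gt b 1 with hb | hb
  · simp only [Nat.clog_of_left_le_one hb, zero_le]
  · refine Nat.clog_le_of_le_pow ?_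
    calc n + 1 ≤ b ^ Nat.clog b n + b ^ Nat.clog b n :=
          add_le_add (Nat.le_pow_clog hb n) (Nat.one_le_pow _ _ (by omega))
      _ = b ^ Nat.clog b n * 2 := (mul_two _).symm
      _ ≤ b ^ (Nat.clog b n + 1) := by
        rw [pow_succ]
        gcongr
        exact hb

lemma amort_pos (w : ℕ) : 0 < amort w := zpow_pos (by norm_num) _

lemma amort_succ_le (w : ℕ) : amort (w + 1) ≤ amort w / 0.981 := by
  have hclog := clog_succ_le_clog_add_one 4 (w + 1)
  calc amort (w + 1)
      ≤ 0.981 ^ (-(Nat.clog 4 (w + 1) : ℤ) - 1) :=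
        zpow_le_zpow_right_of_le_one₀ (by norm_num) (by norm_num) (by omega)
    _ = amort w / 0.981 := zpow_sub_one₀ (by norm_num) _

lemma amort_four : amort 4 = (0.981 ^ 2)⁻¹ := by
  have hclog : Nat.clog 4 (4 + 1) = 2 := by norm_num
  rw [amort, hclog, zpow_neg]
  norm_cast

lemma antitoneOn_div_two_pow_mul_amort :
    AntitoneOn (fun w : ℕ ↦ (w : ℝ) / 2 ^ w * amort w) (Set.Ici 2) := by
  refine antitoneOn_nat_Ici_of_succ_le fun w hw ↦ ?_
  have hw' : (2 : ℝ) ≤ w := by exact_mod_cast hw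
  have hamort := amort_pos w
  calc ((w + 1 : ℕ) : ℝ) / 2 ^ (w + 1) * amort (w + 1)
      ≤ ((w + 1 : ℕ) : ℝ) / 2 ^ (w + 1) * (amort w / 0.981) := by
        gcongr
        exact amort_succ_le w
    _ = (w + 1) / (2 * 0.981) / 2 ^ w * amort w := by
        push_cast
        ring
    _ ≤ w / 2 ^ w * amort w := by
        gcongr
        rw [div_le_iff₀ (by norm_num)]
        linarith

lemma monotoneOn_sub_cube_add_mul_sq {b r : ℝ} (hr : r ^ 2 ≤ 1 / 2) (hb : r / 2 ≤ b) :
    MonotoneOn (fun s ↦ s - s ^ 3 + b * s ^ 2) (Set.Icc 0 r) := by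
  intro p ⟨hp_nonneg, hp_le⟩ q ⟨hq_nonneg, hq_le⟩ hpq
  have hlinear : (p ^ 2 + q ^ 2) / 2 ≤ b * (p + q) := by
    calc (p ^ 2 + q ^ 2) / 2 = p / 2 * p + q / 2 * q := by ring
      _ ≤ r / 2 * p + r / 2 * q := by gcongr
      _ = r / 2 * (p + q) := by ring
      _ ≤ b * (p + q) := by gcongr
  have hsum_sq : (p + q) ^ 2 ≤ 2 := by
    calc (p + q) ^ 2 ≤ (r + r) ^ 2 := by gcongr
      _ ≤ 2 := by linarith
  have hslope : 0 ≤ 1 - (p ^ 2 + p * q + q ^ 2) + b * (p + q) := by linarith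
  rw [← sub_nonneg]
  calc 0 ≤ (q - p) * (1 - (p ^ 2 + p * q + q ^ 2) + b * (p + q)) :=
        mul_nonneg (sub_nonneg.mpr hpq) hslope
    _ = q - q ^ 3 + b * q ^ 2 - (p - p ^ 3 + b * p ^ 2) := by ring

lemma sqrt_one_half : √(1 / 2 : ℝ) = 1 / √2 := by
  rw [Real.sqrt_div zero_le_one, Real.sqrt_one]

lemma monotoneOn_one_sub_mul_sqrt_add {a : ℝ} (ha : 1 / 2 ≤ a) :
    MonotoneOn (fun t ↦ (1 - t) * √t + a * (t / √2)) (Set.Icc 0 (1 / 2)) := by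
  have hcubic : MonotoneOn (fun s ↦ s - s ^ 3 + a / √2 * s ^ 2) (Set.Icc 0 (1 / √2)) := by
    refine monotoneOn_sub_cube_add_mul_sq (by norm_num) ?_
    rw [div_right_comm]
    gcongr
  have hmaps : Set.MapsTo Real.sqrt (Set.Icc 0 (1 / 2)) (Set.Icc 0 (1 / √2)) := by
    intro t ht
    rw [← sqrt_one_half]
    exact ⟨Real.sqrt_nonneg t, Real.sqrt_le_sqrt ht.2⟩
  refine (hcubic.comp (Real.sqrt_monotone.monotoneOn _) hmaps).congr fun t ht ↦ ?_
  obtain ⟨s, hs⟩ : ∃ s, s = √t := ⟨_, rfl⟩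
  have hst : t = s ^ 2 := by rw [hs, Real.sq_sqrt ht.1]
  simp only [Function.comp_apply, ← hs]
  rw [hst]
  ring

lemma one_sub_div_two_pow_pos {t : ℝ} (ht : t < 1) (n : ℕ) : 0 < 1 - t / 2 ^ n := by
  have hpow : (1 : ℝ) ≤ 2 ^ n := one_le_pow₀ one_le_two
  rw [sub_pos, div_lt_one (by positivity)]
  exact ht.trans_le hpow

/-- The quantity `κ_1^{(w)}(t)`; `w` comes first so that `kappaOne w` is a function of `t`. -/
noncomputable def kappaOne (w : ℕ) (t : ℝ) : ℝ :=
  gfun (1 - t / 2 ^ (w - 1)) * Tfun t w * amort w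

lemma kappaOne_eq (w : ℕ) (t : ℝ) :
    kappaOne w t = gfun (1 - t / 2 ^ (w - 1)) / (1 - t / 2 ^ (w - 1)) *
      ((1 - t) * √t + (w - 1) * (t / √2)) * (amort w / 2 ^ (w - 1)) := by
  rw [← Real.div_sqrt (x := t), kappaOne, Tfun]
  ring

lemma monotoneOn_kappaOne {w : ℕ} (hw : 2 ≤ w) :
    MonotoneOn (kappaOne w) (Set.Icc 0 (1 / 2)) := by
  intro x hx y hy hxy
  have hw' : (2 : ℝ) ≤ w := by exact_mod_cast hw
  have hx_pos := one_sub_div_two_pow_pos (hx.2.trans_lt one_half_lt_one) (w - 1)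
  have hy_pos := one_sub_div_two_pow_pos (hy.2.trans_lt one_half_lt_one) (w - 1)
  have hratio : gfun (1 - x / 2 ^ (w - 1)) / (1 - x / 2 ^ (w - 1)) ≤
      gfun (1 - y / 2 ^ (w - 1)) / (1 - y / 2 ^ (w - 1)) :=
    antitoneOn_gfun_div_self hy_pos hx_pos (by gcongr)
  have hsum : (1 - x) * √x + (w - 1) * (x / √2) ≤ (1 - y) * √y + (w - 1) * (y / √2) :=
    monotoneOn_one_sub_mul_sqrt_add (by linarith) hx hy hxy
  have hsum_nonneg : 0 ≤ (1 - x) * √x + (w - 1) * (x / √2) := by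
    have hx_nonneg := hx.1
    have hone_sub : 0 ≤ 1 - x := by linarith [hx.2]
    have hw_sub : 0 ≤ (w : ℝ) - 1 := by linarith
    positivity
  have hratio_nonneg := div_nonneg (gfun_nonneg (1 - y / 2 ^ (w - 1))) hy_pos.le
  have hamort := amort_pos w
  rw [kappaOne_eq, kappaOne_eq]
  gcongr

lemma kappaOne_half {w : ℕ} (hw : 1 ≤ w) :
    kappaOne w (1 / 2) = gfun (1 - 1 / 2 / 2 ^ (w - 1)) / (1 - 1 / 2 / 2 ^ (w - 1)) *
      (w / 2 ^ w * amort w) / √2 := by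
  have hpow : (2 : ℝ) ^ w = 2 ^ (w - 1) * 2 := (pow_sub_one_mul (by omega) 2).symm
  rw [kappaOne_eq, sqrt_one_half, hpow]
  ring

lemma antitoneOn_kappaOne_half : AntitoneOn (fun w ↦ kappaOne w (1 / 2)) (Set.Ici 2) := by
  intro v (hv : 2 ≤ v) w (hw : 2 ≤ w) hvw
  have hv_pos := one_sub_div_two_pow_pos one_half_lt_one (v - 1)
  have hw_pos := one_sub_div_two_pow_pos one_half_lt_one (w - 1)
  have hratio : gfun (1 - 1 / 2 / 2 ^ (w - 1)) / (1 - 1 / 2 / 2 ^ (w - 1)) ≤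
      gfun (1 - 1 / 2 / 2 ^ (v - 1)) / (1 - 1 / 2 / 2 ^ (v - 1)) :=
    antitoneOn_gfun_div_self hv_pos hw_pos (by gcongr; exact one_le_two)
  have hweight : (w : ℝ) / 2 ^ w * amort w ≤ v / 2 ^ v * amort v :=
    antitoneOn_div_two_pow_mul_amort hv hw hvw
  have hratio_nonneg := div_nonneg (gfun_nonneg (1 - 1 / 2 / 2 ^ (v - 1))) hv_pos.le
  have hamort := amort_pos w
  simp only [kappaOne_half (one_le_two.trans hv), kappaOne_half (one_le_two.trans hw)]
  gcongr

lemma kappaOne_four_half : kappaOne 4 (1 / 2) = (4 * 0.981 ^ 2 * √(465 / 128))⁻¹ := by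
  have hratio : gfun (1 - 1 / 2 / 2 ^ (4 - 1)) / (1 - 1 / 2 / 2 ^ (4 - 1)) =
      (√(465 / 256))⁻¹ := by
    rw [gfun_div_self (one_sub_div_two_pow_pos one_half_lt_one _)]
    norm_num
  have hsqrt : √(465 / 128 : ℝ) = √(465 / 256) * √2 := by
    rw [← Real.sqrt_mul (by norm_num)]
    norm_num
  rw [kappaOne_half (by norm_num), hratio, amort_four, hsqrt]
  push_cast
  ring

lemma kappaOne_four_half_lt : kappaOne 4 (1 / 2) < 0.14 := by
  have hsqrt : 1.9 < √(465 / 128 : ℝ) := Real.lt_sqrt_of_sq_lt (by norm_num)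
  calc kappaOne 4 (1 / 2) = (4 * 0.981 ^ 2 * √(465 / 128))⁻¹ := kappaOne_four_half
    _ < (4 * 0.981 ^ 2 * 1.9)⁻¹ := by gcongr
    _ < 0.14 := by norm_num

/-- for every integer `w ≥ 4` and every `t ∈ (0,1/2]`,
`κ_1^{(w)}(t) = g(1 − t/2^{w−1}) · T(t,w) · α^{−⌈log_4(w+1)⌉} < 0.14`. -/
theorem stmt9 (w : ℕ) (hw : 4 ≤ w) (t : ℝ) (ht : t ∈ Set.Ioc (0 : ℝ) (1 / 2)) :
    gfun (1 - t / 2 ^ (w - 1)) * Tfun t w * amort w < 0.14 := by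
  have hw_two : 2 ≤ w := by omega
  calc kappaOne w t
      ≤ kappaOne w (1 / 2) :=
        monotoneOn_kappaOne hw_two (Set.Ioc_subset_Icc_self ht) (by norm_num) ht.2
    _ ≤ kappaOne 4 (1 / 2) := antitoneOn_kappaOne_half (by norm_num) hw_two hw
    _ < 0.14 := kappaOne_four_half_lt
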